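/- Let Ω ⊆ ℝ^d be open. Then 𝒢^∞(Ω) = 𝒢^{L,0}(Ω), and this set is closed in 𝒢(Ω) with respect to the sharp topology. -/

import Mathlib

open Filter MeasureTheory Metric Set
open scoped Topology BigOperators

noncomputable section

/-- Euclidean space ℝ^d. -/
abbrev Euc (d : ℕ) : Type := EuclideanSpace ℝ (Fin d)

variable {d : ℕ}

/-- "P ε holds for small ε". -/
def SmallE (P : ℝ → Prop) : Prop :=
  ∃ ε₀ : ℝ, 0 < ε₀ ∧ ∀ ε : ℝ, 0 < ε → ε < ε₀ → P ε

/-- Directional derivative ∂ₑ u in the direction e. -/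
def pderivDir {F : Type} [NormedAddCommGroup F] [NormedSpace ℝ F]
    (e : Euc d) (u : Euc d → F) : Euc d → F :=
  fun x => fderiv ℝ u x e

/-- Multi-index partial derivative ∂^α u. -/
def partialDeriv {F : Type} [NormedAddCommGroup F] [NormedSpace ℝ F]
    (α : Fin d → ℕ) (u : Euc d → F) : Euc d → F :=
  (List.finRange d).foldr
    (fun i v => (pderivDir (EuclideanSpace.single i (1 : ℝ)))^[α i] v) u

/-- p_{α,K}(u) = sup_{x ∈ K} |∂^α u(x)|. -/
def pSemi {F : Type} [NormedAddCommGroup F] [NormedSpace ℝ F]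
    (α : Fin d → ℕ) (K : Set (Euc d)) (u : Euc d → F) : ℝ :=
  sSup ((fun x => ‖partialDeriv α u x‖) '' K)

/-- p_{k,K}(u) = max_{|α| = k} p_{α,K}(u). -/
def pSemiK {F : Type} [NormedAddCommGroup F] [NormedSpace ℝ F]
    (k : ℕ) (K : Set (Euc d)) (u : Euc d → F) : ℝ :=
  sSup {y : ℝ | ∃ α : Fin d → ℕ, (∑ i, α i) = k ∧ y = pSemi α K u}

/-- Moderate nets of smooth functions on Ω. -/
def Moderate (Ω : Set (Euc d)) (u : ℝ → Euc d → ℂ) : Prop :=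
  (∀ ε ∈ Set.Ioo (0:ℝ) 1, ContDiffOn ℝ (⊤ : ℕ∞) (u ε) Ω) ∧
  ∀ K : Set (Euc d), IsCompact K → K ⊆ Ω → ∀ α : Fin d → ℕ,
    ∃ N : ℕ, SmallE fun ε => pSemi α K (u ε) ≤ ε ^ (-(N : ℝ))

/-- Negligible nets of smooth functions on Ω. -/
def Negligible (Ω : Set (Euc d)) (u : ℝ → Euc d → ℂ) : Prop :=
  (∀ ε ∈ Set.Ioo (0:ℝ) 1, ContDiffOn ℝ (⊤ : ℕ∞) (u ε) Ω) ∧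
  ∀ K : Set (Euc d), IsCompact K → K ⊆ Ω → ∀ α : Fin d → ℕ, ∀ m : ℕ,
    SmallE fun ε => pSemi α K (u ε) ≤ ε ^ (m : ℝ)

/-- The algebra of moderate nets. -/
abbrev ModNet (Ω : Set (Euc d)) : Type := {u : ℝ → Euc d → ℂ // Moderate Ω u}

/-- Two moderate nets are identified when their difference is negligible. -/
def nulRel (Ω : Set (Euc d)) (u v : ModNet Ω) : Prop :=
  Negligible Ω (fun ε x => u.1 ε x - v.1 ε x)

/-- The special Colombeau algebra 𝒢(Ω). -/
abbrev Colombeau (Ω : Set (Euc d)) : Type := Quot (nulRel Ω)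

/-- The valuation of a net of complex numbers, with values in EReal
(⊤ corresponding to nets with arbitrarily good decay). -/
def valuation (z : ℝ → ℂ) : EReal :=
  sSup ((fun b : ℝ => (b : EReal)) '' {b : ℝ | SmallE fun ε => ‖z ε‖ ≤ ε ^ b})

/-- The sharp norm e^{-v(z)} of a net of complex numbers. -/
def sharpNorm (z : ℝ → ℂ) : ℝ :=
  if valuation z = ⊤ then 0 else Real.exp (-(valuation z).toReal)

/-- P_{k,K}(u) = ‖(p_{k,K}(u_ε))_ε‖ (computed via a representative;
independent of the representative). -/
def PNorm (Ω : Set (Euc d)) (k : ℕ) (K : Set (Euc d)) (u : Colombeau Ω) : ℝ :=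
  sharpNorm fun ε => ((pSemiK k K ((Quot.out u).1 ε) : ℝ) : ℂ)

/-- P_{α,K}(u) = ‖(p_{α,K}(u_ε))_ε‖ for a multi-index α. -/
def PNormA (Ω : Set (Euc d)) (α : Fin d → ℕ) (K : Set (Euc d)) (u : Colombeau Ω) : ℝ :=
  sharpNorm fun ε => ((pSemi α K ((Quot.out u).1 ε) : ℝ) : ℂ)

/-- The ultra-pseudo-seminorm P_{α,K} applied to the difference u - v. -/
def PNormDiff (Ω : Set (Euc d)) (α : Fin d → ℕ) (K : Set (Euc d))
    (u v : Colombeau Ω) : ℝ :=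
  sharpNorm fun ε =>
    ((pSemi α K (fun x => (Quot.out u).1 ε x - (Quot.out v).1 ε x) : ℝ) : ℂ)

/-- The sharp topology on 𝒢(Ω): generated by the balls of the
ultra-pseudo-seminorms P_{α,K}. -/
def sharpTopology (Ω : Set (Euc d)) : TopologicalSpace (Colombeau Ω) :=
  TopologicalSpace.generateFrom
    {S | ∃ (u : Colombeau Ω) (α : Fin d → ℕ) (K : Set (Euc d)) (r : ℝ),
      IsCompact K ∧ K ⊆ Ω ∧ 0 < r ∧ S = {v | PNormDiff Ω α K u v < r}}

/-- K satisfies the segment condition: there is r > 0 such that every x ∈ K lies on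
d line segments of length r, in linearly independent (unit) directions, contained in K. -/
def SegmentCond (K : Set (Euc d)) : Prop :=
  ∃ r : ℝ, 0 < r ∧ ∀ x ∈ K, ∃ e : Fin d → Euc d, LinearIndependent ℝ e ∧
    ∀ i : Fin d, ‖e i‖ = 1 ∧ ∃ a : ℝ, a ≤ 0 ∧ 0 ≤ a + r ∧
      ∀ t : ℝ, a ≤ t → t ≤ a + r → x + t • e i ∈ K

/-- 𝒢^∞(K). -/
def GInfK (Ω : Set (Euc d)) (K : Set (Euc d)) : Set (Colombeau Ω) :=
  {u | ∃ v : ModNet Ω, Quot.mk (nulRel Ω) v = u ∧ ∃ N : ℕ,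
    ∀ α : Fin d → ℕ, SmallE fun ε => pSemi α K (v.1 ε) ≤ ε ^ (-(N : ℝ))}

/-- 𝒢^{L,a}(K), the generalized functions of sublinear growth with slope
smaller than a on K. -/
def GLaK (Ω : Set (Euc d)) (a : ℝ) (K : Set (Euc d)) : Set (Colombeau Ω) :=
  {u | ∃ v : ModNet Ω, Quot.mk (nulRel Ω) v = u ∧ ∃ a' : ℝ, a' < a ∧ ∃ b : ℝ,
    ∀ α : Fin d → ℕ,
      SmallE fun ε => pSemi α K (v.1 ε) ≤ ε ^ (-(a' * (∑ i, (α i : ℝ))) - b)}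

/-- 𝒢^{L,0}(K) = ⋂_{a>0} 𝒢^{L,a}(K). -/
def GL0K (Ω : Set (Euc d)) (K : Set (Euc d)) : Set (Colombeau Ω) :=
  {u | ∀ a : ℝ, 0 < a → u ∈ GLaK Ω a K}

/-- 𝒢^∞(Ω) = ⋂_{K⊂⊂Ω} 𝒢^∞(K). -/
def GInfOmega (Ω : Set (Euc d)) : Set (Colombeau Ω) :=
  {u | ∀ K : Set (Euc d), IsCompact K → K ⊆ Ω → u ∈ GInfK Ω K}

/-- 𝒢^{L,a}(Ω) = ⋂_{K⊂⊂Ω} 𝒢^{L,a}(K). -/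
def GLaOmega (Ω : Set (Euc d)) (a : ℝ) : Set (Colombeau Ω) :=
  {u | ∀ K : Set (Euc d), IsCompact K → K ⊆ Ω → u ∈ GLaK Ω a K}

/-- 𝒢^{L,0}(Ω) = ⋂_{K⊂⊂Ω} 𝒢^{L,0}(K). -/
def GL0Omega (Ω : Set (Euc d)) : Set (Colombeau Ω) :=
  {u | ∀ K : Set (Euc d), IsCompact K → K ⊆ Ω → u ∈ GL0K Ω K}

/-- u ∈ 𝒢(Ω) is sublinear. -/
def Sublinear (Ω : Set (Euc d)) (u : Colombeau Ω) : Prop :=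
  ∃ v : ModNet Ω, Quot.mk (nulRel Ω) v = u ∧
    ∀ K : Set (Euc d), IsCompact K → K ⊆ Ω →
      ∀ x : ℝ → Euc d, (∀ ε ∈ Set.Ioo (0:ℝ) 1, x ε ∈ K) →
        ∃ k : ℝ, ∃ p : ℕ → ℝ,
          Filter.Tendsto (fun n : ℕ => p n + k * n) atTop atTop ∧
          ∀ α : Fin d → ℕ,
            SmallE fun ε => ‖partialDeriv α (v.1 ε) (x ε)‖ ≤ ε ^ (p (∑ i, α i))

/-- The scaled mollifier ψ_δ(x) = δ^{-d} ψ(x/δ). -/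
def mollify (ψ : Euc d → ℝ) (δ : ℝ) : Euc d → ℝ :=
  fun x => ((δ : ℝ) ^ d)⁻¹ * ψ (δ⁻¹ • x)

/-- Convolution u ⋆ ψ (with a real-valued kernel ψ). -/
def conv (u : Euc d → ℂ) (ψ : Euc d → ℝ) : Euc d → ℂ :=
  fun x => ∫ t : Euc d, u (x - t) * ((ψ t : ℝ) : ℂ)

/-- 𝒢_c(Ω): compactly supported generalized functions (restriction to Ω∖K
is 0 in 𝒢(Ω∖K), i.e. some representative is negligible on Ω∖K). -/
def GCompact (Ω : Set (Euc d)) : Set (Colombeau Ω) :=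
  {u | ∃ v : ModNet Ω, Quot.mk (nulRel Ω) v = u ∧
    ∃ K : Set (Euc d), IsCompact K ∧ K ⊆ Ω ∧ Negligible (Ω \ K) v.1}


theorem smallE_iff (P : ℝ → Prop) : SmallE P ↔ ∀ᶠ ε in 𝓝[>] (0:ℝ), P ε := by
  rw [eventually_nhdsWithin_iff, Metric.eventually_nhds_iff]
  constructor
  · rintro ⟨e, he, h⟩
    refine ⟨e, he, fun y hy hy0 => h y hy0 ?_⟩
    rw [Real.dist_eq, sub_zero] at hy
    exact lt_of_le_of_lt (le_abs_self y) hy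
  · rintro ⟨e, he, h⟩
    refine ⟨e, he, fun y hy0 hy => h ?_ hy0⟩
    rw [Real.dist_eq, sub_zero, abs_of_pos hy0]; exact hy

theorem ev_Ioo (c : ℝ) (hc : 0 < c) : ∀ᶠ ε in 𝓝[>] (0:ℝ), ε ∈ Set.Ioo (0:ℝ) c :=
  Ioo_mem_nhdsGT hc

/-- Constants are absorbed by a small power. -/
theorem ev_absorb (C s : ℝ) (hs : 0 < s) : ∀ᶠ ε in 𝓝[>] (0:ℝ), C ≤ ε ^ (-s) := by
  have := tendsto_rpow_neg_nhdsGT_zero (y := -s) (by linarith)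
  exact this.eventually_ge_atTop C

theorem ev_rpow_small (c s : ℝ) (hc : 0 < c) (hs : 0 < s) :
    ∀ᶠ ε in 𝓝[>] (0:ℝ), ε ^ s ≤ c := by
  filter_upwards [ev_absorb (c⁻¹) s hs, ev_Ioo 1 one_pos] with ε h h1
  rw [Real.rpow_neg h1.1.le] at h
  exact (inv_le_inv₀ hc (Real.rpow_pos_of_pos h1.1 s)).1 h

theorem pderivDir_contDiffOn {Ω : Set (Euc d)} (hΩ : IsOpen Ω) (e : Euc d) {f : Euc d → ℂ}
    (hf : ContDiffOn ℝ (⊤ : ℕ∞) f Ω) : ContDiffOn ℝ (⊤ : ℕ∞) (pderivDir e f) Ω := by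
  have h1 : ContDiffOn ℝ (⊤ : ℕ∞) (fderiv ℝ f) Ω :=
    hf.fderiv_of_isOpen hΩ (by simp)
  exact h1.clm_apply contDiffOn_const

theorem diffAt_of {Ω : Set (Euc d)} (hΩ : IsOpen Ω) {f : Euc d → ℂ}
    (hf : ContDiffOn ℝ (⊤ : ℕ∞) f Ω) {x : Euc d} (hx : x ∈ Ω) : DifferentiableAt ℝ f x :=
  (hf.differentiableOn (by simp)).differentiableAt (hΩ.mem_nhds hx)

theorem iter_contDiffOn {Ω : Set (Euc d)} (hΩ : IsOpen Ω) (e : Euc d) {f : Euc d → ℂ}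
    (hf : ContDiffOn ℝ (⊤ : ℕ∞) f Ω) (k : ℕ) :
    ContDiffOn ℝ (⊤ : ℕ∞) ((pderivDir e)^[k] f) Ω := by
  induction k with
  | zero => exact hf
  | succ k ih => rw [Function.iterate_succ_apply']; exact pderivDir_contDiffOn hΩ e ih

theorem partialDeriv_contDiffOn {Ω : Set (Euc d)} (hΩ : IsOpen Ω) (α : Fin d → ℕ)
    {f : Euc d → ℂ} (hf : ContDiffOn ℝ (⊤ : ℕ∞) f Ω) :
    ContDiffOn ℝ (⊤ : ℕ∞) (partialDeriv α f) Ω := by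
  unfold partialDeriv
  induction List.finRange d with
  | nil => exact hf
  | cons i l ih => exact iter_contDiffOn hΩ _ ih _

/-- w = f - g on Ω, with f, g smooth. -/
def RelSub (Ω : Set (Euc d)) (w f g : Euc d → ℂ) : Prop :=
  ContDiffOn ℝ (⊤ : ℕ∞) f Ω ∧ ContDiffOn ℝ (⊤ : ℕ∞) g Ω ∧ ∀ x ∈ Ω, w x = f x - g x

theorem relSub_pderiv {Ω : Set (Euc d)} (hΩ : IsOpen Ω) (e : Euc d) {w f g : Euc d → ℂ}
    (h : RelSub Ω w f g) : RelSub Ω (pderivDir e w) (pderivDir e f) (pderivDir e g) := by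
  obtain ⟨hf, hg, hw⟩ := h
  refine ⟨pderivDir_contDiffOn hΩ e hf, pderivDir_contDiffOn hΩ e hg, fun x hx => ?_⟩
  have h1 : w =ᶠ[𝓝 x] (f - g) := by
    filter_upwards [hΩ.mem_nhds hx] with y hy
    exact hw y hy
  unfold pderivDir
  rw [h1.fderiv_eq, fderiv_sub (diffAt_of hΩ hf hx) (diffAt_of hΩ hg hx)]
  rfl

theorem relSub_iter {Ω : Set (Euc d)} (hΩ : IsOpen Ω) (e : Euc d) {w f g : Euc d → ℂ}
    (h : RelSub Ω w f g) (k : ℕ) :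
    RelSub Ω ((pderivDir e)^[k] w) ((pderivDir e)^[k] f) ((pderivDir e)^[k] g) := by
  induction k with
  | zero => exact h
  | succ k ih => simp only [Function.iterate_succ_apply']; exact relSub_pderiv hΩ e ih

theorem relSub_partialDeriv {Ω : Set (Euc d)} (hΩ : IsOpen Ω) (α : Fin d → ℕ)
    {w f g : Euc d → ℂ} (h : RelSub Ω w f g) :
    RelSub Ω (partialDeriv α w) (partialDeriv α f) (partialDeriv α g) := by
  unfold partialDeriv
  induction List.finRange d with
  | nil => exact h
  | cons i l ih => exact relSub_iter hΩ _ ih _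

theorem foldr_step (u : Euc d → ℂ) (β : Fin d → ℕ) (i : Fin d) (hβ : ∀ j < i, β j = 0)
    (l : List (Fin d)) (hl : l.Pairwise (· < ·)) (hi : i ∈ l) :
    l.foldr (fun j v => (pderivDir (EuclideanSpace.single j (1 : ℝ)))^[
        Function.update β i (β i + 1) j] v) u =
    pderivDir (EuclideanSpace.single i (1 : ℝ))
      (l.foldr (fun j v => (pderivDir (EuclideanSpace.single j (1 : ℝ)))^[β j] v) u) := by
  induction l with
  | nil => simp at hi
  | cons j l ih =>
    rw [List.pairwise_cons] at hl
    simp only [List.foldr_cons]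
    by_cases hij : i = j
    · subst hij
      have hnot : ∀ k ∈ l, k ≠ i := fun k hk => (hl.1 k hk).ne'
      have hc : l.foldr (fun j v => (pderivDir (EuclideanSpace.single j (1 : ℝ)))^[
        Function.update β i (β i + 1) j] v) u =
        l.foldr (fun j v => (pderivDir (EuclideanSpace.single j (1 : ℝ)))^[β j] v) u := by
        clear ih hi hl
        induction l with
        | nil => rfl
        | cons k l ih2 =>
          simp only [List.foldr_cons]
          rw [ih2 (fun m hm => hnot m (List.mem_cons_of_mem _ hm)),
            Function.update_of_ne (hnot k List.mem_cons_self)]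
      rw [hc, Function.update_self, Function.iterate_succ_apply']
    · have hil : i ∈ l := by
        rcases List.mem_cons.1 hi with h | h
        · exact absurd h hij
        · exact h
      have hji := hl.1 i hil
      rw [Function.update_of_ne (Ne.symm hij), hβ j hji]
      exact ih hl.2 hil

theorem partialDeriv_step (u : Euc d → ℂ) (β : Fin d → ℕ) (i : Fin d) (hβ : ∀ j < i, β j = 0) :
    partialDeriv (Function.update β i (β i + 1)) u =
      pderivDir (EuclideanSpace.single i (1 : ℝ)) (partialDeriv β u) :=
  foldr_step u β i hβ _ (List.pairwise_lt_finRange d) (List.mem_finRange i)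

theorem partialDeriv_step_iter (u : Euc d → ℂ) (β : Fin d → ℕ) (i : Fin d)
    (hβ : ∀ j < i, β j = 0) (k : ℕ) :
    partialDeriv (Function.update β i (β i + (k + 1))) u =
      pderivDir (EuclideanSpace.single i (1 : ℝ))
        (partialDeriv (Function.update β i (β i + k)) u) := by
  rw [← partialDeriv_step u (Function.update β i (β i + k)) i]
  · simp [add_assoc]
  · intro j hj
    rw [Function.update_of_ne hj.ne]; exact hβ j hj

theorem partialDeriv_zero (u : Euc d → ℂ) : partialDeriv (0 : Fin d → ℕ) u = u := by
  unfold partialDeriv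
  induction List.finRange d with
  | nil => rfl
  | cons i l ih => simp

theorem le_pSemi {Ω K : Set (Euc d)} (hΩ : IsOpen Ω) (hK : IsCompact K) (hKΩ : K ⊆ Ω)
    (α : Fin d → ℕ) {f : Euc d → ℂ} (hf : ContDiffOn ℝ (⊤ : ℕ∞) f Ω) {x : Euc d} (hx : x ∈ K) :
    ‖partialDeriv α f x‖ ≤ pSemi α K f := by
  apply le_csSup
  · exact hK.bddAbove_image
      (((partialDeriv_contDiffOn hΩ α hf).continuousOn.mono hKΩ).norm)
  · exact ⟨x, hx, rfl⟩

theorem pSemi_le {K : Set (Euc d)} (α : Fin d → ℕ) {f : Euc d → ℂ} {c : ℝ} (hc : 0 ≤ c)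
    (h : ∀ x ∈ K, ‖partialDeriv α f x‖ ≤ c) : pSemi α K f ≤ c := by
  apply Real.sSup_le _ hc
  rintro _ ⟨x, hx, rfl⟩
  exact h x hx

theorem pSemi_nonneg {K : Set (Euc d)} (α : Fin d → ℕ) (f : Euc d → ℂ) : 0 ≤ pSemi α K f := by
  apply Real.sSup_nonneg
  rintro _ ⟨x, hx, rfl⟩
  exact norm_nonneg _

theorem pSemi_mono {Ω K L : Set (Euc d)} (hΩ : IsOpen Ω) (hL : IsCompact L) (hLΩ : L ⊆ Ω)
    (hKL : K ⊆ L) (α : Fin d → ℕ) {f : Euc d → ℂ} (hf : ContDiffOn ℝ (⊤ : ℕ∞) f Ω) :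
    pSemi α K f ≤ pSemi α L f :=
  pSemi_le α (pSemi_nonneg α f) fun _ hx => le_pSemi hΩ hL hLΩ α hf (hKL hx)

theorem pSemi_left {Ω K : Set (Euc d)} (hΩ : IsOpen Ω) (hK : IsCompact K) (hKΩ : K ⊆ Ω)
    (α : Fin d → ℕ) {f g : Euc d → ℂ} (hf : ContDiffOn ℝ (⊤ : ℕ∞) f Ω)
    (hg : ContDiffOn ℝ (⊤ : ℕ∞) g Ω) :
    pSemi α K f ≤ pSemi α K g + pSemi α K (fun x => f x - g x) := by
  apply pSemi_le _ (add_nonneg (pSemi_nonneg _ _) (pSemi_nonneg _ _))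
  intro x hx
  have h1 := le_pSemi hΩ hK hKΩ α hg hx
  have h2 := le_pSemi hΩ hK hKΩ α (hf.sub hg) hx
  have h3 := (relSub_partialDeriv hΩ α (w := fun x => f x - g x) ⟨hf, hg, fun _ _ => rfl⟩).2.2 x
    (hKΩ hx)
  have h4 : partialDeriv α f x = partialDeriv α g x + partialDeriv α (fun x => f x - g x) x := by
    rw [h3]; ring
  rw [h4]
  exact (norm_add_le _ _).trans (add_le_add h1 h2)

theorem pSemi_right {Ω K : Set (Euc d)} (hΩ : IsOpen Ω) (hK : IsCompact K) (hKΩ : K ⊆ Ω)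
    (α : Fin d → ℕ) {f g : Euc d → ℂ} (hf : ContDiffOn ℝ (⊤ : ℕ∞) f Ω)
    (hg : ContDiffOn ℝ (⊤ : ℕ∞) g Ω) :
    pSemi α K g ≤ pSemi α K f + pSemi α K (fun x => f x - g x) := by
  apply pSemi_le _ (add_nonneg (pSemi_nonneg _ _) (pSemi_nonneg _ _))
  intro x hx
  have h1 := le_pSemi hΩ hK hKΩ α hf hx
  have h2 := le_pSemi hΩ hK hKΩ α (hf.sub hg) hx
  have h3 := (relSub_partialDeriv hΩ α (w := fun x => f x - g x) ⟨hf, hg, fun _ _ => rfl⟩).2.2 x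
    (hKΩ hx)
  have h4 : partialDeriv α g x = partialDeriv α f x - partialDeriv α (fun x => f x - g x) x := by
    rw [h3]; ring
  rw [h4]
  exact (norm_sub_le _ _).trans (add_le_add h1 h2)

/-- The growth exponent of p_{α,K} is at most c. -/
def Expo {Ω : Set (Euc d)} (K : Set (Euc d)) (α : Fin d → ℕ) (c : ℝ) (v : ModNet Ω) : Prop :=
  ∀ c', c < c' → ∀ᶠ ε in 𝓝[>] (0:ℝ), pSemi α K (v.1 ε) ≤ ε ^ (-c')

theorem expo_of_add {Ω K : Set (Euc d)} {α : Fin d → ℕ} {c : ℝ} {v w : ModNet Ω} {q : ℝ → ℝ}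
    (hv : Expo K α c v) (hc : 0 ≤ c) (hq : ∀ᶠ ε in 𝓝[>] (0:ℝ), q ε ≤ 1)
    (h : ∀ ε ∈ Set.Ioo (0:ℝ) 1, pSemi α K (w.1 ε) ≤ pSemi α K (v.1 ε) + q ε) :
    Expo K α c w := by
  intro c' hc'
  filter_upwards [hv ((c + c') / 2) (by linarith), hq, ev_Ioo 1 one_pos,
    ev_absorb 2 ((c' - c) / 2) (by linarith)] with ε h1 h2 h3 h4
  have h5 := h ε h3
  have h6 : (1:ℝ) ≤ ε ^ (-((c + c') / 2)) :=
    Real.one_le_rpow_of_pos_of_le_one_of_nonpos h3.1 h3.2.le (by linarith)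
  have h7 : ε ^ (-c') = ε ^ (-((c' - c) / 2)) * ε ^ (-((c + c') / 2)) := by
    rw [← Real.rpow_add h3.1]; congr 1; ring
  rw [h7]
  nlinarith

theorem expo_mono {Ω K : Set (Euc d)} {α : Fin d → ℕ} {c c' : ℝ} {v : ModNet Ω}
    (hv : Expo K α c v) (h : c ≤ c') : Expo K α c' v :=
  fun b hb => hv b (lt_of_le_of_lt h hb)

theorem expo_of_ev {Ω K : Set (Euc d)} {α : Fin d → ℕ} {c : ℝ} {v : ModNet Ω}
    (hv : ∀ᶠ ε in 𝓝[>] (0:ℝ), pSemi α K (v.1 ε) ≤ ε ^ (-c)) : Expo K α c v := by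
  intro c' hc'
  filter_upwards [hv, ev_Ioo 1 one_pos] with ε h1 h2
  exact h1.trans (Real.rpow_le_rpow_of_exponent_ge h2.1 h2.2.le (by linarith))

theorem expo_quot {Ω K : Set (Euc d)} (hΩ : IsOpen Ω) (hK : IsCompact K) (hKΩ : K ⊆ Ω)
    {α : Fin d → ℕ} {c : ℝ} (hc : 0 ≤ c) {v w : ModNet Ω}
    (h : Quot.mk (nulRel Ω) v = Quot.mk (nulRel Ω) w) (hv : Expo K α c v) : Expo K α c w := by
  have key : ∀ a b : ModNet Ω, nulRel Ω a b → Expo K α c a = Expo K α c b := by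
    intro a b hab
    have hq : ∀ᶠ ε in 𝓝[>] (0:ℝ), pSemi α K (fun x => a.1 ε x - b.1 ε x) ≤ 1 := by
      have := (smallE_iff _).1 (hab.2 K hK hKΩ α 0)
      simpa using this
    apply propext
    constructor
    · intro ha
      exact expo_of_add ha hc hq fun ε hε => pSemi_right hΩ hK hKΩ α (a.2.1 ε hε) (b.2.1 ε hε)
    · intro hb
      exact expo_of_add hb hc hq fun ε hε => pSemi_left hΩ hK hKΩ α (a.2.1 ε hε) (b.2.1 ε hε)
  have := congrArg (Quot.lift (Expo K α c) key) h
  exact this.mp hv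

theorem lagrange_coeffs (n : ℕ) : ∃ c : ℕ → ℝ, ∀ m ≤ n,
    ∑ k ∈ Finset.range (n + 1), c k * (k : ℝ) ^ m = if m = 1 then 1 else 0 := by
  refine ⟨fun k => (Polynomial.derivative
    (Lagrange.basis (Finset.range (n + 1)) (fun k : ℕ => (k : ℝ)) k)).eval 0, fun m hm => ?_⟩
  have hinj : Set.InjOn (fun k : ℕ => (k : ℝ)) (Finset.range (n + 1) : Set ℕ) :=
    fun a _ b _ h => Nat.cast_injective h
  have h := Lagrange.eq_interpolate (f := (Polynomial.X ^ m : Polynomial ℝ)) hinj (by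
    rw [Polynomial.degree_X_pow, Finset.card_range]
    exact_mod_cast Nat.lt_succ_of_le hm)
  have h2 := congrArg (fun p => (Polynomial.derivative p).eval 0) h
  simp only [Lagrange.interpolate_apply, Polynomial.derivative_sum, Polynomial.eval_finsetSum,
    Polynomial.derivative_C_mul, Polynomial.eval_C_mul, Polynomial.eval_pow,
    Polynomial.eval_X] at h2
  simp_rw [mul_comm _ ((_ : ℝ) ^ m)]
  rw [← h2, Polynomial.derivative_X_pow]
  rcases m with _ | _ | m <;> simp

theorem interp1d (n : ℕ) (hn : 1 ≤ n) : ∃ C : ℝ, 0 ≤ C ∧ ∀ (F : ℕ → ℝ → ℂ) (h A B : ℝ), 0 < h →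
    0 ≤ A → 0 ≤ B →
    (∀ k, ∀ t ∈ Set.Icc (0:ℝ) (n * h), HasDerivAt (F k) (F (k + 1) t) t) →
    (∀ t ∈ Set.Icc (0:ℝ) (n * h), ‖F 0 t‖ ≤ A) →
    (∀ t ∈ Set.Icc (0:ℝ) (n * h), ‖F (n + 1) t‖ ≤ B) →
    h * ‖F 1 0‖ ≤ C * (A + h ^ (n + 1) * B) := by
  obtain ⟨c, hc⟩ := lagrange_coeffs n
  refine ⟨∑ k ∈ Finset.range (n + 1), |c k| * (1 + (n : ℝ) ^ (n + 1)),
    Finset.sum_nonneg fun k _ => by positivity, ?_⟩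
  intro F h A B hh hA hB hF hFA hFB
  set s := Set.Icc (0:ℝ) (n * h) with hs
  have hnh : (0:ℝ) < n * h := mul_pos (by exact_mod_cast hn) hh
  have hud : UniqueDiffOn ℝ s := uniqueDiffOn_Icc hnh
  have hiter : ∀ k, ∀ t ∈ s, iteratedDerivWithin k (F 0) s t = F k t := by
    intro k
    induction k with
    | zero => intro t _; simp
    | succ k ih =>
      intro t ht
      rw [iteratedDerivWithin_succ, derivWithin_congr ih (ih t ht)]
      exact (hF k t ht).hasDerivWithinAt.derivWithin (hud t ht)
  have hcd : ContDiffOn ℝ (n + 1) (F 0) s := by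
    have : ∀ m : ℕ, ∀ k, ContDiffOn ℝ m (F k) s := by
      intro m
      induction m with
      | zero =>
        intro k
        simp only [Nat.cast_zero, contDiffOn_zero]
        exact fun t ht => (hF k t ht).continuousAt.continuousWithinAt
      | succ m ih =>
        intro k
        push_cast
        rw [contDiffOn_succ_iff_derivWithin hud]
        refine ⟨fun t ht => (hF k t ht).differentiableAt.differentiableWithinAt, by simp, ?_⟩
        exact (ih (k + 1)).congr fun t ht => (hF k t ht).hasDerivWithinAt.derivWithin (hud t ht)
    exact_mod_cast this (n + 1) 0
  have h0 : (0:ℝ) ∈ s := ⟨le_rfl, hnh.le⟩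
  have hT : ∀ k ∈ Finset.range (n + 1),
      ‖taylorWithinEval (F 0) n s 0 (k * h)‖ ≤ (1 + (n:ℝ) ^ (n + 1)) * (A + h ^ (n + 1) * B) := by
    intro k hk
    have hkn : (k : ℝ) ≤ n := by exact_mod_cast Nat.lt_succ_iff.1 (Finset.mem_range.1 hk)
    have hmem : (k : ℝ) * h ∈ s := ⟨by positivity, by gcongr⟩
    have h1 := taylor_mean_remainder_bound (f := F 0) (n := n) (C := B) hnh.le hcd hmem
      (fun y hy => by rw [hiter _ y hy]; exact hFB y hy)
    have h2 := hFA _ hmem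
    have h3 : ‖taylorWithinEval (F 0) n s 0 (k * h)‖ ≤
        ‖F 0 (k * h)‖ + ‖F 0 (k * h) - taylorWithinEval (F 0) n s 0 (k * h)‖ := by
      have := norm_sub_le (F 0 (k * h)) (F 0 (k * h) - taylorWithinEval (F 0) n s 0 (k * h))
      simpa using this
    have h4 : B * (k * h - 0) ^ (n + 1) / (n.factorial : ℝ) ≤ n ^ (n + 1) * (h ^ (n + 1) * B) := by
      have hfac : (1:ℝ) ≤ (n.factorial : ℝ) := by exact_mod_cast Nat.factorial_pos n
      have : B * (k * h - 0) ^ (n + 1) / (n.factorial : ℝ) ≤ B * (k * h - 0) ^ (n + 1) :=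
        div_le_self (by rw [sub_zero]; positivity) hfac
      refine this.trans ?_
      rw [sub_zero, mul_pow]
      have : (k:ℝ) ^ (n + 1) ≤ (n:ℝ) ^ (n + 1) := by gcongr
      have h5 : 0 ≤ h ^ (n + 1) * B := by positivity
      nlinarith
    have h6 : 0 ≤ h ^ (n + 1) * B := by positivity
    have h7 : 0 ≤ (n:ℝ) ^ (n + 1) * A := by positivity
    nlinarith
  have hsum : ∑ k ∈ Finset.range (n + 1), (c k : ℂ) * taylorWithinEval (F 0) n s 0 (k * h)
      = h * F 1 0 := by
    have : ∀ k : ℕ, (c k : ℂ) * taylorWithinEval (F 0) n s 0 (k * h) =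
        ∑ m ∈ Finset.range (n + 1), (((c k * (k:ℝ) ^ m : ℝ)) : ℂ) *
          ((((m.factorial : ℝ)⁻¹ * h ^ m : ℝ) : ℂ) * F m 0) := by
      intro k
      rw [taylor_within_apply, Finset.mul_sum]
      refine Finset.sum_congr rfl fun m _ => ?_
      rw [hiter m 0 h0, Complex.real_smul]
      push_cast
      ring
    simp_rw [this]
    rw [Finset.sum_comm]
    simp_rw [← Finset.sum_mul, ← Complex.ofReal_sum]
    rw [Finset.sum_eq_single 1]
    · rw [hc 1 hn]; simp
    · intro m hm hm1
      rw [hc m (Nat.lt_succ_iff.1 (Finset.mem_range.1 hm)), if_neg hm1]; simp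
    · intro h1; exact absurd (Finset.mem_range.2 (by omega)) h1
  have : h * ‖F 1 0‖ = ‖(h : ℂ) * F 1 0‖ := by
    rw [norm_mul, Complex.norm_real, Real.norm_of_nonneg hh.le]
  rw [this, ← hsum, Finset.sum_mul]
  refine (norm_sum_le _ _).trans (Finset.sum_le_sum fun k hk => ?_)
  rw [norm_mul, Complex.norm_real, Real.norm_eq_abs, mul_assoc]
  exact mul_le_mul_of_nonneg_left (hT k hk) (abs_nonneg _)

theorem multi_deriv_bound {Ω K' : Set (Euc d)} (hΩ : IsOpen Ω) (hK' : IsCompact K')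
    (hKΩ' : K' ⊆ Ω) (β : Fin d → ℕ) (i : Fin d) (hβ : ∀ j < i, β j = 0) (n : ℕ) (hn : 1 ≤ n) :
    ∃ C : ℝ, 0 ≤ C ∧ ∀ (f : Euc d → ℂ) (x : Euc d) (h : ℝ), ContDiffOn ℝ (⊤ : ℕ∞) f Ω → 0 < h →
      (∀ t ∈ Set.Icc (0:ℝ) (n * h), x + t • EuclideanSpace.single i (1:ℝ) ∈ K') →
      h * ‖partialDeriv (Function.update β i (β i + 1)) f x‖ ≤
        C * (pSemi β K' f + h ^ (n + 1) * pSemi (Function.update β i (β i + (n + 1))) K' f) := by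
  obtain ⟨C, hC, H⟩ := interp1d n hn
  refine ⟨C, hC, fun f x h hf hh hx => ?_⟩
  have := H (fun k t => partialDeriv (Function.update β i (β i + k)) f
    (x + t • EuclideanSpace.single i (1:ℝ))) h _ _ hh (pSemi_nonneg (K := K') β f)
    (pSemi_nonneg (K := K') (Function.update β i (β i + (n + 1))) f) ?_ ?_ ?_
  · simpa using this
  · intro k t ht
    have h1 := (diffAt_of hΩ (partialDeriv_contDiffOn hΩ (Function.update β i (β i + k)) hf)
      (hKΩ' (hx t ht))).hasFDerivAt
    have h2 : HasDerivAt (fun t : ℝ => x + t • (EuclideanSpace.single i (1:ℝ) : Euc d))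
        (EuclideanSpace.single i (1:ℝ)) t := by
      simpa using ((hasDerivAt_id t).smul_const
        (EuclideanSpace.single i (1:ℝ) : Euc d)).const_add x
    rw [partialDeriv_step_iter f β i hβ k]
    exact h1.comp_hasDerivAt t h2
  · intro t ht
    have := le_pSemi hΩ hK' hKΩ' β hf (hx t ht)
    simpa using this
  · intro t ht
    exact le_pSemi hΩ hK' hKΩ' _ hf (hx t ht)

/-- sublinear growth of every slope on every compact set -/
def HL {Ω : Set (Euc d)} (v : ModNet Ω) : Prop :=
  ∀ K : Set (Euc d), IsCompact K → K ⊆ Ω → ∀ a : ℝ, 0 < a → ∃ b : ℝ, ∀ α : Fin d → ℕ,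
    Expo K α (a * (∑ i, (α i : ℝ)) + b) v

theorem key_step {Ω K L : Set (Euc d)} (hΩ : IsOpen Ω) {v : ModNet Ω} (hv : HL v)
    (hL : IsCompact L) (hLΩ : L ⊆ Ω) (r : ℝ) (hr : 0 < r) (hKL : Metric.cthickening r K ⊆ L)
    (β : Fin d → ℕ) (i : Fin d) (hβ : ∀ j < i, β j = 0) (M : ℝ) (hM : Expo L β M v) :
    Expo K (Function.update β i (β i + 1)) M v := by
  intro M' hM'
  set s := (M' - M) / 3 with hs
  have hs0 : 0 < s := by rw [hs]; linarith
  obtain ⟨b, hb⟩ := hv L hL hLΩ (s / 2) (by linarith)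
  set S : ℝ := ∑ j, ((Function.update β i 0 j : ℕ) : ℝ) with hS
  have hsum : ∀ m : ℕ, ∑ j, ((Function.update β i m j : ℕ) : ℝ) = S + m := by
    intro m
    have h1 : ∀ m : ℕ, ∑ j, ((Function.update β i m j : ℕ) : ℝ) =
        m + ∑ j ∈ Finset.univ.erase i, (β j : ℝ) := by
      intro m
      rw [← Finset.add_sum_erase _ _ (Finset.mem_univ i), Function.update_self]
      congr 1
      refine Finset.sum_congr rfl fun j hj => ?_
      rw [Function.update_of_ne (Finset.ne_of_mem_erase hj)]
    rw [hS, h1 m, h1 0]; push_cast; ring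
  obtain ⟨n, hn⟩ := exists_nat_ge
    (max 1 ((s / 2 * (S + β i + 1) + b + 1 - M) / (s / 2)))
  have hn1 : 1 ≤ n := by exact_mod_cast (le_max_left _ _).trans hn
  have hn2 : s / 2 * (S + β i + 1) + b + 1 - M ≤ n * (s / 2) :=
    (div_le_iff₀ (by linarith)).1 ((le_max_right _ _).trans hn)
  obtain ⟨C, hC, H⟩ := multi_deriv_bound hΩ hL hLΩ β i hβ n hn1
  have hnpos : (0:ℝ) < n := by exact_mod_cast hn1
  filter_upwards [ev_Ioo 1 one_pos, hM (M + s) (by linarith),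
    hb (Function.update β i (β i + (n + 1))) _ (lt_add_one _),
    ev_rpow_small (r / n) s (by positivity) hs0, ev_absorb (2 * C) s hs0] with ε h1 h2 h3 h4 h5
  have he := h1.1
  apply pSemi_le _ (Real.rpow_nonneg he.le _)
  intro x hx
  have hh : 0 < ε ^ s := Real.rpow_pos_of_pos he s
  have hnr : n * ε ^ s ≤ r := by
    rw [le_div_iff₀ hnpos] at h4; linarith
  have h6 := H (v.1 ε) x (ε ^ s) (v.2.1 ε h1) hh (by
    intro t ht
    apply hKL
    apply Metric.mem_cthickening_of_dist_le _ x _ _ hx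
    rw [dist_eq_norm, add_sub_cancel_left, norm_smul, Real.norm_of_nonneg ht.1]
    simp only [EuclideanSpace.norm_single, norm_one, mul_one]
    exact ht.2.trans hnr)
  have h7 : (ε ^ s) ^ (n + 1) * pSemi (Function.update β i (β i + (n + 1))) L (v.1 ε)
      ≤ ε ^ (-(M + s)) := by
    rw [hsum] at h3
    refine (mul_le_mul_of_nonneg_left h3 (by positivity)).trans ?_
    rw [← Real.rpow_natCast, ← Real.rpow_mul he.le, ← Real.rpow_add he]
    apply Real.rpow_le_rpow_of_exponent_ge he h1.2.le
    push_cast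
    nlinarith
  have h8 : ε ^ s * ‖partialDeriv (Function.update β i (β i + 1)) (v.1 ε) x‖ ≤
      ε ^ (-s) * ε ^ (-(M + s)) := by
    have h9 : 0 < ε ^ (-(M + s)) := Real.rpow_pos_of_pos he _
    calc _ ≤ _ := h6
      _ ≤ C * (ε ^ (-(M + s)) + ε ^ (-(M + s))) := by gcongr
      _ = 2 * C * ε ^ (-(M + s)) := by ring
      _ ≤ _ := by gcongr
  have h10 : ε ^ (-s) * ε ^ (-(M + s)) = ε ^ s * ε ^ (-M') := by
    rw [← Real.rpow_add he, ← Real.rpow_add he]; congr 1; rw [hs]; ring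
  rw [h10] at h8
  exact le_of_mul_le_mul_left h8 hh

theorem key {Ω : Set (Euc d)} (hΩ : IsOpen Ω) {v : ModNet Ω} (hv : HL v) (N : ℕ) :
    ∀ (K L : Set (Euc d)) (r : ℝ) (α : Fin d → ℕ) (M : ℝ), IsCompact K → IsCompact L → L ⊆ Ω →
    0 < r → Metric.cthickening r K ⊆ L → ∑ i, α i = N → Expo L 0 M v → Expo K α M v := by
  induction N with
  | zero =>
    intro K L r α M hK hL hLΩ hr hKL hα hM c' hc'
    have h0 : α = 0 := by
      funext i
      exact (Finset.sum_eq_zero_iff.1 hα) i (Finset.mem_univ i)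
    subst h0
    filter_upwards [hM c' hc', ev_Ioo 1 one_pos] with ε h1 h2
    exact (pSemi_mono hΩ hL hLΩ ((Metric.self_subset_cthickening K).trans hKL) 0
      (v.2.1 ε h2)).trans h1
  | succ N ih =>
    intro K L r α M hK hL hLΩ hr hKL hα hM
    classical
    have hne : (Finset.univ.filter fun i => α i ≠ 0).Nonempty := by
      by_contra hcon
      rw [Finset.not_nonempty_iff_eq_empty, Finset.filter_eq_empty_iff] at hcon
      have : ∑ i, α i = 0 := Finset.sum_eq_zero fun i hi => by simpa using hcon hi
      omega
    obtain ⟨i, hi, himin⟩ : ∃ i, α i ≠ 0 ∧ ∀ j < i, α j = 0 := by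
      refine ⟨Finset.min' _ hne, (Finset.mem_filter.1 (Finset.min'_mem _ hne)).2, fun j hj => ?_⟩
      by_contra hcon
      exact absurd (Finset.min'_le _ j (Finset.mem_filter.2 ⟨Finset.mem_univ j, hcon⟩))
        (not_le.2 hj)
    set β := Function.update α i (α i - 1) with hβ
    have hβi : β i + 1 = α i := by rw [hβ, Function.update_self]; omega
    have hαβ : α = Function.update β i (β i + 1) := by
      rw [hβi, hβ]; simp
    have hβ0 : ∀ j < i, β j = 0 := fun j hj => by
      rw [hβ, Function.update_of_ne hj.ne]; exact himin j hj
    have hβs : ∑ j, β j = N := by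
      have h1 := Finset.add_sum_erase Finset.univ α (Finset.mem_univ i)
      have h2 := Finset.add_sum_erase Finset.univ β (Finset.mem_univ i)
      have h3 : ∑ j ∈ Finset.univ.erase i, β j = ∑ j ∈ Finset.univ.erase i, α j :=
        Finset.sum_congr rfl fun j hj => by
          rw [hβ, Function.update_of_ne (Finset.ne_of_mem_erase hj)]
      omega
    have hL' : IsCompact (Metric.cthickening (r / 2) K) := hK.cthickening
    have hsub : Metric.cthickening (r / 2) (Metric.cthickening (r / 2) K) ⊆ L := by
      refine (Metric.cthickening_cthickening_subset (by linarith) (by linarith) K).trans ?_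
      rw [add_halves]; exact hKL
    have hL'L : Metric.cthickening (r / 2) K ⊆ L :=
      (Metric.self_subset_cthickening _).trans hsub
    rw [hαβ]
    exact key_step hΩ hv hL' (hL'L.trans hLΩ) (r / 2) (by linarith) le_rfl β i hβ0 M
      (ih _ L (r / 2) β M hL' hL hLΩ (by linarith) hsub hβs hM)

theorem HL_of_GL0 {Ω : Set (Euc d)} (hΩ : IsOpen Ω) (v : ModNet Ω)
    (h : Quot.mk (nulRel Ω) v ∈ GL0Omega Ω) : HL v := by
  intro K hK hKΩ a ha
  obtain ⟨w, hw, a', ha', b, hb⟩ := h K hK hKΩ a ha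
  refine ⟨max b 0, fun α => ?_⟩
  have hS : 0 ≤ ∑ i, (α i : ℝ) := Finset.sum_nonneg fun i _ => Nat.cast_nonneg _
  refine expo_quot hΩ hK hKΩ (add_nonneg (mul_nonneg ha.le hS) (le_max_right _ _)) hw ?_
  have h1 := (smallE_iff _).1 (hb α)
  have h2 : Expo K α (a' * (∑ i, (α i : ℝ)) + b) w := by
    apply expo_of_ev
    filter_upwards [h1] with ε h
    refine h.trans (le_of_eq ?_)
    congr 1; ring
  exact expo_mono h2 (add_le_add (mul_le_mul_of_nonneg_right ha'.le hS) (le_max_left _ _))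

theorem GInf_sub_GL0 {Ω : Set (Euc d)} : GInfOmega Ω ⊆ GL0Omega Ω := by
  intro u hu K hK hKΩ a ha
  obtain ⟨w, hw, N, hN⟩ := hu K hK hKΩ
  refine ⟨w, hw, 0, ha, N, fun α => ?_⟩
  simpa using hN α

theorem exists_thick {Ω K : Set (Euc d)} (hΩ : IsOpen Ω) (hK : IsCompact K) (hKΩ : K ⊆ Ω) :
    ∃ r : ℝ, 0 < r ∧ IsCompact (Metric.cthickening r K) ∧ Metric.cthickening r K ⊆ Ω := by
  obtain ⟨r, hr, h⟩ := hK.exists_cthickening_subset_open hΩ hKΩ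
  exact ⟨r, hr, hK.cthickening, h⟩

theorem mem_GInfK_of_expo {Ω K : Set (Euc d)} (v : ModNet Ω) (N : ℕ)
    (h : ∀ α, Expo K α N v) : Quot.mk (nulRel Ω) v ∈ GInfK Ω K := by
  refine ⟨v, rfl, N + 1, fun α => (smallE_iff _).2 (h α _ ?_)⟩
  push_cast; linarith

theorem GL0_sub_GInf {Ω : Set (Euc d)} (hΩ : IsOpen Ω) : GL0Omega Ω ⊆ GInfOmega Ω := by
  intro u hu K hK hKΩ
  obtain ⟨v, rfl⟩ := Quot.exists_rep u
  have hv := HL_of_GL0 hΩ v hu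
  obtain ⟨r, hr, hL, hLΩ⟩ := exists_thick hΩ hK hKΩ
  obtain ⟨N, hN⟩ := v.2.2 _ hL hLΩ 0
  exact mem_GInfK_of_expo v N fun α => key hΩ hv _ K _ r α N hK hL hLΩ hr le_rfl rfl
    (expo_of_ev ((smallE_iff _).1 hN))

theorem ev_of_sharpNorm_lt {z : ℝ → ℂ} (h : sharpNorm z < 1) :
    ∀ᶠ ε in 𝓝[>] (0:ℝ), ‖z ε‖ ≤ 1 := by
  have hpos : (0 : EReal) < valuation z := by
    unfold sharpNorm at h
    split_ifs at h with h1
    · rw [h1]; exact EReal.zero_lt_top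
    · by_contra hcon
      have h2 : (valuation z).toReal ≤ 0 := EReal.toReal_nonpos (not_lt.1 hcon)
      have := Real.one_le_exp (x := -(valuation z).toReal) (by linarith)
      linarith
  obtain ⟨_, ⟨b, hb, rfl⟩, hb0⟩ := lt_sSup_iff.1 hpos
  have hb0' : 0 < b := EReal.coe_pos.1 hb0
  filter_upwards [(smallE_iff _).1 hb, ev_Ioo 1 one_pos] with ε h1 h2
  exact h1.trans (Real.rpow_le_one h2.1.le h2.2.le hb0'.le)

theorem relSub_zero (Ω : Set (Euc d)) : RelSub Ω (fun _ => (0:ℂ)) (fun _ => 0) (fun _ => 0) :=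
  ⟨contDiffOn_const, contDiffOn_const, fun _ _ => by simp⟩

theorem partialDeriv_zero_fun (α : Fin d → ℕ) (x : Euc d) :
    partialDeriv α (fun _ : Euc d => (0:ℂ)) x = 0 := by
  have := (relSub_partialDeriv isOpen_univ α (relSub_zero (Set.univ : Set (Euc d)))).2.2 x
    (Set.mem_univ x)
  simpa using this

theorem PNormDiff_self {Ω K : Set (Euc d)} (α : Fin d → ℕ) (u : Colombeau Ω) :
    PNormDiff Ω α K u u < 1 := by
  have h0 : pSemi α K (fun _ : Euc d => (0:ℂ)) = 0 :=
    le_antisymm (pSemi_le α le_rfl fun x _ => by rw [partialDeriv_zero_fun, norm_zero])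
      (pSemi_nonneg _ _)
  have hv : valuation (fun _ : ℝ => (0:ℂ)) = ⊤ := by
    rw [EReal.eq_top_iff_forall_lt]
    intro y
    refine lt_of_lt_of_le (b := ((y + 1 : ℝ) : EReal)) (by exact_mod_cast lt_add_one y) ?_
    apply le_sSup
    refine ⟨y + 1, ⟨1, one_pos, fun ε h _ => ?_⟩, rfl⟩
    simpa using Real.rpow_nonneg h.le _
  unfold PNormDiff
  simp only [sub_self, h0, Complex.ofReal_zero]
  unfold sharpNorm
  rw [if_pos hv]; exact one_pos

theorem ev_of_PNormDiff {Ω K : Set (Euc d)} {α : Fin d → ℕ} {u v : Colombeau Ω}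
    (h : PNormDiff Ω α K u v < 1) : ∀ᶠ ε in 𝓝[>] (0:ℝ),
      pSemi α K (fun x => (Quot.out u).1 ε x - (Quot.out v).1 ε x) ≤ 1 := by
  filter_upwards [ev_of_sharpNorm_lt h] with ε h1
  rw [Complex.norm_real] at h1
  exact (le_abs_self _).trans h1

theorem GInf_closed {Ω : Set (Euc d)} (hΩ : IsOpen Ω) :
    @IsClosed (Colombeau Ω) (sharpTopology Ω) (GInfOmega Ω) := by
  letI := sharpTopology Ω
  rw [← isOpen_compl_iff, isOpen_iff_forall_mem_open]
  intro u hu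
  have hu' : ¬ ∀ K : Set (Euc d), IsCompact K → K ⊆ Ω → u ∈ GInfK Ω K := hu
  push Not at hu'
  obtain ⟨K, hK, hKΩ, hnot⟩ := hu'
  obtain ⟨r, hr, hL, hLΩ⟩ := exists_thick hΩ hK hKΩ
  obtain ⟨N, hN⟩ := (Quot.out u).2.2 _ hL hLΩ 0
  have hNe : Expo (Metric.cthickening r K) 0 N (Quot.out u) :=
    expo_of_ev ((smallE_iff _).1 hN)
  have hex : ∃ α, ¬ Expo K α N (Quot.out u) := by
    by_contra hcon
    push Not at hcon
    have := mem_GInfK_of_expo _ N hcon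
    rw [Quot.out_eq] at this
    exact hnot this
  obtain ⟨α, hα⟩ := hex
  refine ⟨{v | PNormDiff Ω 0 (Metric.cthickening r K) u v < 1} ∩ {v | PNormDiff Ω α K u v < 1},
    ?_, ?_, PNormDiff_self _ _, PNormDiff_self _ _⟩
  · rintro v ⟨hv1, hv2⟩ hvG
    apply hα
    have e1 := ev_of_PNormDiff hv1
    have e2 := ev_of_PNormDiff hv2
    have hNv : Expo (Metric.cthickening r K) 0 N (Quot.out v) :=
      expo_of_add hNe (Nat.cast_nonneg N) e1 fun ε hε =>
        pSemi_right hΩ hL hLΩ 0 ((Quot.out u).2.1 ε hε) ((Quot.out v).2.1 ε hε)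
    have hHL : HL (Quot.out v) := HL_of_GL0 hΩ _ (by
      rw [Quot.out_eq]; exact GInf_sub_GL0 hvG)
    have hk := key hΩ hHL _ K _ r α N hK hL hLΩ hr le_rfl rfl hNv
    exact expo_of_add hk (Nat.cast_nonneg N) e2 fun ε hε =>
        pSemi_left hΩ hK hKΩ α ((Quot.out u).2.1 ε hε) ((Quot.out v).2.1 ε hε)
  · apply IsOpen.inter
    · exact TopologicalSpace.isOpen_generateFrom_of_mem
        ⟨u, 0, _, 1, hL, hLΩ, one_pos, rfl⟩
    · exact TopologicalSpace.isOpen_generateFrom_of_mem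
        ⟨u, α, _, 1, hK, hKΩ, one_pos, rfl⟩

/-- 𝒢^∞(Ω) = 𝒢^{L,0}(Ω), and this set is closed in the sharp topology. -/
theorem GInfOmega_eq_GL0Omega_and_isClosed {d : ℕ} (Ω : Set (Euc d)) (hΩ : IsOpen Ω) :
    GInfOmega Ω = GL0Omega Ω ∧
      @IsClosed (Colombeau Ω) (sharpTopology Ω) (GInfOmega Ω) := by
  exact ⟨Set.Subset.antisymm GInf_sub_GL0 (GL0_sub_GInf hΩ), GInf_closed hΩ⟩

end
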